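/- Let V be a finite nonempty type, E : Finset (V × V) a directed road network, and P a nonempty finite set of source–destination pairs (s, t) ∈ V × V with s ≠ t for each pair. Then the minimum cardinality of an edge set Q' ⊆ E with f*(E \ Q', P) = 0 equals the minimum cardinality of a directed multicut F ⊆ E for P; moreover both minima are attained, since the full edge set E itself is a directed multicut for P. (This is the statement that an optimal solution to the constructed instance of the problem of Minimizing Targets with ξ = 0 has the same size as an optimal Minimum Multi-Cut solution.) -/

import Mathlib

open scoped ENNReal

/-- A directed walk of length `n` from `s` to `t` using only edges in `A`. -/
def IsDirWalk {V : Type*} (A : Finset (V × V)) (s t : V) (n : ℕ) : Prop :=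
  ∃ f : ℕ → V, f 0 = s ∧ f n = t ∧ ∀ i < n, (f i, f (i + 1)) ∈ A

/-- The directed distance `d_A(s,t)` in `ℝ≥0∞`: the infimum of lengths of
directed walks from `s` to `t` in `A` (`∞` if there is no such walk). -/
noncomputable def dDist {V : Type*} (A : Finset (V × V)) (s t : V) : ℝ≥0∞ :=
  sInf {x : ℝ≥0∞ | ∃ n : ℕ, IsDirWalk A s t n ∧ x = (n : ℝ≥0∞)}

/-- The traffic-quality objective `f*` under the simple traffic model `M∅`. -/
noncomputable def fStar {V : Type*} (A : Finset (V × V)) (R : Finset (V × V)) : ℝ≥0∞ :=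
  (R.card : ℝ≥0∞)⁻¹ * ∑ p ∈ R, (dDist A p.1 p.2)⁻¹

/-- The ride set `R_S`: all ordered pairs of distinct terminals of `S`. -/
def ridesOf {V : Type*} [DecidableEq V] (S : Finset V) : Finset (V × V) :=
  (S ×ˢ S).filter fun p => p.1 ≠ p.2

/-- `F` is a directed multiway cut for the terminal set `S` in the network `E`:
in `E \ F` there is no directed walk between any two distinct terminals. -/
def IsDirMultiwayCut {V : Type*} [DecidableEq V] (E F : Finset (V × V)) (S : Finset V) : Prop :=
  ∀ s ∈ S, ∀ s' ∈ S, s ≠ s' → ∀ n : ℕ, ¬ IsDirWalk (E \ F) s s' n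

/-- `F` is a directed multicut for the set `P` of source–destination pairs in `E`:
in `E \ F` there is no directed walk from `s` to `t` for any `(s,t) ∈ P`. -/
def IsDirMulticut {V : Type*} [DecidableEq V] (E F : Finset (V × V)) (P : Finset (V × V)) : Prop :=
  ∀ p ∈ P, ∀ n : ℕ, ¬ IsDirWalk (E \ F) p.1 p.2 n

section

variable {V : Type*} {s t : V}

theorem isDirWalk_empty_iff {n : ℕ} :
    IsDirWalk ∅ s t n ↔ n = 0 ∧ s = t := by
  constructor
  · rintro ⟨f, rfl, rfl, hf⟩
    obtain rfl | hn := n.eq_zero_or_pos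
    · exact ⟨rfl, rfl⟩
    · exact absurd (hf 0 hn) (Finset.notMem_empty _)
  · rintro ⟨rfl, rfl⟩
    exact ⟨fun _ ↦ s, rfl, rfl, fun i hi ↦ absurd hi i.not_lt_zero⟩

theorem dDist_eq_top_iff {A : Finset (V × V)} :
    dDist A s t = ∞ ↔ ∀ n, ¬ IsDirWalk A s t n := by
  rw [dDist, sInf_eq_top]
  constructor
  · intro h n hn
    exact ENNReal.natCast_ne_top n (h n ⟨n, hn, rfl⟩)
  · rintro h _ ⟨n, hn, -⟩
    exact absurd hn (h n)

theorem fStar_eq_zero_iff {A R : Finset (V × V)} :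
    fStar A R = 0 ↔ ∀ p ∈ R, dDist A p.1 p.2 = ∞ := by
  -- For `R = ∅` the prefactor is `∞`, but `∞ * 0 = 0` in `ℝ≥0∞`.
  have card_inv_ne_zero : (R.card : ℝ≥0∞)⁻¹ ≠ 0 :=
    ENNReal.inv_ne_zero.mpr (ENNReal.natCast_ne_top _)
  simp only [fStar, mul_eq_zero, card_inv_ne_zero, false_or, Finset.sum_eq_zero_iff,
    ENNReal.inv_eq_zero]

theorem isDirMulticut_self_iff [DecidableEq V] {E P : Finset (V × V)} :
    IsDirMulticut E E P ↔ ∀ p ∈ P, p.1 ≠ p.2 := by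
  simp only [IsDirMulticut, Finset.sdiff_self, isDirWalk_empty_iff, not_and, forall_eq, ne_eq]

theorem fStar_sdiff_eq_zero_iff [DecidableEq V] {E F P : Finset (V × V)} :
    fStar (E \ F) P = 0 ↔ IsDirMulticut E F P := by
  simp only [fStar_eq_zero_iff, dDist_eq_top_iff, IsDirMulticut]

end

theorem stmt_6_general {V : Type*} [DecidableEq V]
    (E : Finset (V × V)) (P : Finset (V × V)) (_hP : P.Nonempty)
    (hst : ∀ p ∈ P, p.1 ≠ p.2) :
    IsDirMulticut E E P ∧
    sInf {n : ℕ | ∃ Q' ⊆ E, Q'.card = n ∧ fStar (E \ Q') P = 0} =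
      sInf {n : ℕ | ∃ F ⊆ E, F.card = n ∧ IsDirMulticut E F P} ∧
    sInf {n : ℕ | ∃ Q' ⊆ E, Q'.card = n ∧ fStar (E \ Q') P = 0} ∈
      {n : ℕ | ∃ Q' ⊆ E, Q'.card = n ∧ fStar (E \ Q') P = 0} ∧
    sInf {n : ℕ | ∃ F ⊆ E, F.card = n ∧ IsDirMulticut E F P} ∈
      {n : ℕ | ∃ F ⊆ E, F.card = n ∧ IsDirMulticut E F P} := by
  have hE : IsDirMulticut E E P := isDirMulticut_self_iff.mpr hst
  have multicut_cards_nonempty : {n : ℕ | ∃ F ⊆ E, F.card = n ∧ IsDirMulticut E F P}.Nonempty :=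
    ⟨E.card, E, subset_rfl, rfl, hE⟩
  have min_mem := Nat.sInf_mem multicut_cards_nonempty
  have same_cards : {n : ℕ | ∃ Q' ⊆ E, Q'.card = n ∧ fStar (E \ Q') P = 0} =
      {n : ℕ | ∃ F ⊆ E, F.card = n ∧ IsDirMulticut E F P} := by
    simp only [fStar_sdiff_eq_zero_iff]
  rw [same_cards]
  exact ⟨hE, rfl, min_mem, min_mem⟩

theorem stmt_6 {V : Type*} [Fintype V] [Nonempty V] [DecidableEq V]
    (E : Finset (V × V)) (P : Finset (V × V)) (hP : P.Nonempty)
    (hst : ∀ p ∈ P, p.1 ≠ p.2) :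
    IsDirMulticut E E P ∧
    sInf {n : ℕ | ∃ Q' ⊆ E, Q'.card = n ∧ fStar (E \ Q') P = 0} =
      sInf {n : ℕ | ∃ F ⊆ E, F.card = n ∧ IsDirMulticut E F P} ∧
    sInf {n : ℕ | ∃ Q' ⊆ E, Q'.card = n ∧ fStar (E \ Q') P = 0} ∈
      {n : ℕ | ∃ Q' ⊆ E, Q'.card = n ∧ fStar (E \ Q') P = 0} ∧
    sInf {n : ℕ | ∃ F ⊆ E, F.card = n ∧ IsDirMulticut E F P} ∈
      {n : ℕ | ∃ F ⊆ E, F.card = n ∧ IsDirMulticut E F P} :=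
  stmt_6_general E P hP hst
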